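/- The ℤ-module isomorphism h : ℤ^d[C] → ℤ[x]/Pℤ[x] with h(C^i e₁) = X^i for all i ∈ ℕ maps Cℤ^d[C] bijectively onto the ideal (X) of ℤ[x]/Pℤ[x] generated by X; consequently, h induces a ℤ-module isomorphism ℤ^d[C]/Cℤ^d[C] ≅ (ℤ[x]/Pℤ[x])/(X). -/

import Mathlib

/-!
As a `ℤ`-module, `ℤᵈ[C]` is spanned by the vectors `Cⁱ e₁`, because `e₁, C e₁, …, Cᵈ⁻¹ e₁` is the
standard basis. Since `h` sends `Cⁱ e₁` to `Xⁱ`, it intertwines `C` with multiplication by `X`.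
Being bijective, it therefore carries the image of `C` onto the image of multiplication by `X`,
which is the ideal `(X)`.
-/

open Matrix Polynomial

noncomputable section

/-- `ℤᵈ[C]` as a `ℤ`-submodule of `ℚᵈ`. -/
def intSpanSub {n : ℕ} (A : Matrix (Fin n) (Fin n) ℚ) : Submodule ℤ (Fin n → ℚ) :=
  Submodule.span ℤ
    {x | ∃ (i : ℕ) (v : Fin n → ℤ), x = (A ^ i).mulVec (fun j => ((v j : ℚ)))}

/-- The companion matrix of a monic polynomial of degree `n`. -/
def companionMat (n : ℕ) (q : Polynomial ℚ) : Matrix (Fin n) (Fin n) ℚ :=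
  Matrix.of fun i j =>
    (if (i : ℕ) = (j : ℕ) + 1 then 1 else 0) +
    (if (j : ℕ) = n - 1 then -(q.coeff i) else 0)

/-- `C·ℤᵈ[C]` as a `ℤ`-submodule of `ℚᵈ`. -/
def cImage {n : ℕ} (A : Matrix (Fin n) (Fin n) ℚ) : Submodule ℤ (Fin n → ℚ) :=
  Submodule.map ((Matrix.mulVecLin A).restrictScalars ℤ) (intSpanSub A)

theorem map_comap_subtype_map_eq_range {R M B : Type*} [Semiring R] [AddCommMonoid M]
    [AddCommMonoid B] [Module R M] [Module R B] {f : M →ₗ[R] M} {N : Submodule R M}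
    (hf : ∀ x ∈ N, f x ∈ N) {g : B →ₗ[R] B} (h : N ≃ₗ[R] B)
    (hcomm : (h : N →ₗ[R] B) ∘ₗ f.restrict hf = g ∘ₗ h) :
    ((N.map f).comap N.subtype).map (h : N →ₗ[R] B) = g.range := by
  rw [← LinearMap.range_restrict f hf, ← LinearMap.range_comp, hcomm,
    LinearMap.range_comp_of_range_eq_top _ h.range]

section Krylov

variable (R : Type*) {M S : Type*} [CommSemiring R] [AddCommMonoid M] [Module R M]
  [Monoid S] [DistribMulAction S M]

/-- The Krylov submodule `R v + R (a • v) + R (a² • v) + ⋯`, the smallest `a`-invariant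
`R`-submodule containing `v`. The operator `a` may come from any monoid acting on `M`, so that both
`Module.End R M` and square matrices (acting by `*ᵥ`) are covered. -/
def krylovSubmodule (a : S) (v : M) : Submodule R M :=
  Submodule.span R (Set.range fun i : ℕ => a ^ i • v)

theorem pow_smul_mem_krylovSubmodule (a : S) (v : M) (i : ℕ) :
    a ^ i • v ∈ krylovSubmodule R a v :=
  Submodule.subset_span ⟨i, rfl⟩

variable {R} [SMulCommClass S R M] {a : S} {v : M}

theorem smul_mem_krylovSubmodule {x : M} (hx : x ∈ krylovSubmodule R a v) :
    a • x ∈ krylovSubmodule R a v := by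
  suffices krylovSubmodule R a v ≤
      (krylovSubmodule R a v).comap (DistribSMul.toLinearMap R M a) from this hx
  refine Submodule.span_le.2 (Set.range_subset_iff.2 fun i => ?_)
  simpa only [pow_succ', mul_smul] using! pow_smul_mem_krylovSubmodule R a v (i + 1)

theorem pow_smul_mem_krylovSubmodule_of_mem {x : M} (hx : x ∈ krylovSubmodule R a v) (i : ℕ) :
    a ^ i • x ∈ krylovSubmodule R a v := by
  induction i with
  | zero => rwa [pow_zero, one_smul]
  | succ i ih =>
    rw [pow_succ', mul_smul]
    exact smul_mem_krylovSubmodule ih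

variable (R a v) in
/-- The action of `a` as an endomorphism of the Krylov submodule. -/
def krylovSubmodule.smulEnd : Module.End R (krylovSubmodule R a v) :=
  (DistribSMul.toLinearMap R M a).restrict fun _ => smul_mem_krylovSubmodule

theorem krylovSubmodule.smulEnd_pow_smul (i : ℕ) :
    smulEnd R a v ⟨a ^ i • v, pow_smul_mem_krylovSubmodule R a v i⟩ =
      ⟨a ^ (i + 1) • v, pow_smul_mem_krylovSubmodule R a v (i + 1)⟩ :=
  Subtype.ext <|
    calc a • a ^ i • v = (a * a ^ i) • v := smul_smul a (a ^ i) v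
      _ = a ^ (i + 1) • v := by rw [pow_succ']

theorem krylovSubmodule.comp_smulEnd {B : Type*} [Semiring B] [Algebra R B] {b : B}
    (h : krylovSubmodule R a v →ₗ[R] B)
    (hpow : ∀ i, h ⟨a ^ i • v, pow_smul_mem_krylovSubmodule R a v i⟩ = b ^ i) :
    h ∘ₗ smulEnd R a v = LinearMap.mul R B b ∘ₗ h := by
  refine (Submodule.linearMap_eq_iff_of_eq_span _ _ rfl).2 ?_
  rintro ⟨_, i, rfl⟩
  calc h (smulEnd R a v ⟨a ^ i • v, pow_smul_mem_krylovSubmodule R a v i⟩)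
      = b ^ (i + 1) := by rw [smulEnd_pow_smul, hpow]
    _ = b * h ⟨a ^ i • v, pow_smul_mem_krylovSubmodule R a v i⟩ := by rw [hpow, pow_succ']

end Krylov

open scoped Pointwise in
theorem stmt13_general {R M S B : Type*} [CommRing R] [AddCommGroup M] [Module R M] [Monoid S]
    [DistribMulAction S M] [SMulCommClass S R M] [CommRing B] [Algebra R B] {a : S} {v : M} {b : B}
    {N : Submodule R M} (hN : N = krylovSubmodule R a v) (h : N ≃ₗ[R] B)
    (hpow : ∀ (x : N) (i : ℕ), (x : M) = a ^ i • v → h x = b ^ i) :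
    h '' {x : N | (x : M) ∈ a • N} = ((Ideal.span {b}).restrictScalars R : Submodule R B) ∧
      Nonempty ((N ⧸ (a • N).comap N.subtype) ≃ₗ[R]
        (B ⧸ (Ideal.span {b}).restrictScalars R)) := by
  subst hN
  have hcomm : (h : krylovSubmodule R a v →ₗ[R] B) ∘ₗ krylovSubmodule.smulEnd R a v =
      LinearMap.mul R B b ∘ₗ h :=
    krylovSubmodule.comp_smulEnd _ fun i => hpow _ i rfl
  have hmap : ((a • krylovSubmodule R a v).comap (krylovSubmodule R a v).subtype).map
      (h : krylovSubmodule R a v →ₗ[R] B) = (Ideal.span {b}).restrictScalars R :=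
    (map_comap_subtype_map_eq_range _ h hcomm).trans (Ideal.range_mul B b)
  exact ⟨congrArg SetLike.coe hmap, ⟨Submodule.Quotient.equiv _ _ h hmap⟩⟩

theorem intSpanSub_eq_krylovSubmodule {n : ℕ} {A : Matrix (Fin n) (Fin n) ℚ} {v : Fin n → ℚ}
    {u : Fin n → ℤ} (hvu : v = fun k => (u k : ℚ))
    (hv : ∀ j, Pi.single j 1 ∈ krylovSubmodule ℤ A v) :
    intSpanSub A = krylovSubmodule ℤ A v := by
  refine le_antisymm (Submodule.span_le.2 ?_) (Submodule.span_mono ?_)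
  · rintro _ ⟨i, w, rfl⟩
    have hw : (fun j => (w j : ℚ)) = ∑ j, w j • Pi.single j (1 : ℚ) := by
      ext k
      simp [Finset.sum_apply, Pi.single_apply]
    refine pow_smul_mem_krylovSubmodule_of_mem ?_ i
    rw [hw]
    exact Submodule.sum_mem _ fun j _ => Submodule.smul_mem _ _ (hv j)
  · rintro _ ⟨i, rfl⟩
    exact ⟨i, u, congrArg (A ^ i *ᵥ ·) hvu⟩

theorem companionMat_mulVec_single {d : ℕ} (q : Polynomial ℚ) {j : ℕ} (hj : j + 1 < d) :
    companionMat d q *ᵥ Pi.single ⟨j, by omega⟩ 1 = Pi.single ⟨j + 1, hj⟩ 1 := by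
  have hlast : j ≠ d - 1 := by omega
  ext i
  simp [companionMat, Matrix.col_apply, Pi.single_apply, Fin.ext_iff, hlast]

theorem companionMat_pow_mulVec_first {d : ℕ} (q : Polynomial ℚ) {j : ℕ} (hj : j < d) :
    companionMat d q ^ j *ᵥ (fun k : Fin d => if (k : ℕ) = 0 then 1 else 0) =
      Pi.single ⟨j, hj⟩ 1 := by
  induction j with
  | zero =>
    ext k
    simp [Pi.single_apply, Fin.ext_iff]
  | succ j ih =>
    rw [pow_succ', ← Matrix.mulVec_mulVec, ih (by omega), companionMat_mulVec_single q hj]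

theorem intSpanSub_companionMat (d : ℕ) (q : Polynomial ℚ) :
    intSpanSub (companionMat d q) =
      krylovSubmodule ℤ (companionMat d q) (fun k : Fin d => if (k : ℕ) = 0 then 1 else 0) := by
  refine intSpanSub_eq_krylovSubmodule (u := fun k : Fin d => if (k : ℕ) = 0 then 1 else 0)
    (by simp only [Int.cast_ite, Int.cast_one, Int.cast_zero]) fun j => ?_
  rw [← companionMat_pow_mulVec_first q j.2]
  exact pow_smul_mem_krylovSubmodule ℤ _ _ _

/-- any `ℤ`-module isomorphism `h : ℤᵈ[C] ≃ ℤ[x]/Pℤ[x]` with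
`h(Cⁱe₁) = Xⁱ` maps `Cℤᵈ[C]` bijectively onto the ideal `(X)`; consequently it
induces a `ℤ`-module isomorphism `ℤᵈ[C]/Cℤᵈ[C] ≅ (ℤ[x]/Pℤ[x])/(X)`. -/
theorem stmt13 (d : ℕ) (hd : 1 ≤ d) (P : Polynomial ℤ)
    (hdeg : P.natDegree = d) (hprim : P.IsPrimitive)
    (hlead : P.coeff d ≠ 0) (h0 : P.coeff 0 ≠ 0)
    (c : ℤ) (q : Polynomial ℚ) (hq : q.Monic)
    (hPq : P.map (Int.castRingHom ℚ) = Polynomial.C (c : ℚ) * q)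
    (Cm : Matrix (Fin d) (Fin d) ℚ) (hCm : Cm = companionMat d q)
    (e₁ : Fin d → ℚ) (he₁ : e₁ = fun j : Fin d => if (j : ℕ) = 0 then 1 else 0) :
    ∀ h : intSpanSub Cm ≃ₗ[ℤ] Polynomial ℤ ⧸ Ideal.span {P},
      (∀ (x : intSpanSub Cm) (i : ℕ),
        (x : Fin d → ℚ) = (Cm ^ i).mulVec e₁ →
        h x = (Ideal.Quotient.mk (Ideal.span {P}) X) ^ i) →
      (⇑h '' {x : intSpanSub Cm | (x : Fin d → ℚ) ∈ cImage Cm} =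
        ↑(Submodule.restrictScalars ℤ
          (Ideal.span {Ideal.Quotient.mk (Ideal.span {P}) X}))) ∧
      Nonempty
        ((intSpanSub Cm ⧸ Submodule.comap (intSpanSub Cm).subtype (cImage Cm))
          ≃ₗ[ℤ]
          ((Polynomial ℤ ⧸ Ideal.span {P}) ⧸ Submodule.restrictScalars ℤ
            (Ideal.span {Ideal.Quotient.mk (Ideal.span {P}) X}))) := by
  subst hCm he₁
  -- `C • v` is `C *ᵥ v` by definition, so `cImage C` unfolds to the pointwise `C • intSpanSub C`.
  exact fun h hpow => stmt13_general (intSpanSub_companionMat d q) h hpow
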